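/- Let Q : F₂^n → F₂^n be a quadratic map whose associated polynomials q₁,…,q_n ∈ F₂[x₁,…,x_n] are in bijective form q_i = x_i² + Σ_{l<k} c^{(i)}_{lk} x_l x_k and form a regular sequence in every order, and let L = Σ_i L_i x_i be an n×n matrix of homogeneous linear forms with β(q) = Lq. Define linear maps ρ, ξ : F₂^n → M_n(F₂) by ρ(e_i) = L_i and ξ(e_i) = L_i² + L_i on the standard basis. Then ξ(Q(w)) = ρ(w) + ρ(w)² for all w ∈ F₂^n; that is, the square Q_gl ∘ ρ = ξ ∘ Q commutes, where Q_gl(A) = A + A². -/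

import Mathlib

open MvPolynomial

/-- The polarization (associated bilinear map) of a map `Q`:
`B(x,y) = Q(x+y) + Q(x) + Q(y)`. -/
def qpolar {W V : Type*} [Add W] [Add V] (Q : W → V) (x y : W) : V :=
  Q (x + y) + Q x + Q y

/-- `Q` is a quadratic map between `F₂`-vector spaces: its polarization is `F₂`-bilinear. -/
def IsQuadraticMap {W V : Type*} [AddCommGroup W] [Module (ZMod 2) W]
    [AddCommGroup V] [Module (ZMod 2) V] (Q : W → V) : Prop :=
  (∀ x y z : W, qpolar Q (x + y) z = qpolar Q x z + qpolar Q y z) ∧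
  (∀ x y z : W, qpolar Q x (y + z) = qpolar Q x y + qpolar Q x z)

/-- The Bockstein operator: the unique `F₂`-derivation of `F₂[x₁,…,x_m]`
with `β(x_i) = x_i²`, given by `β(f) = Σ_i x_i² ∂f/∂x_i`. -/
noncomputable def bockstein {m : ℕ} (f : MvPolynomial (Fin m) (ZMod 2)) :
    MvPolynomial (Fin m) (ZMod 2) :=
  ∑ i : Fin m, X i ^ 2 * pderiv i f

/-- The quadratic polynomials associated to a quadratic map `Q : F₂^m → F₂^n`:
`q_k = Σ_i Q_k(e_i) x_i² + Σ_{i<j} B_k(e_i,e_j) x_i x_j`. -/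
noncomputable def assocPoly {m n : ℕ} (Q : (Fin m → ZMod 2) → (Fin n → ZMod 2)) (k : Fin n) :
    MvPolynomial (Fin m) (ZMod 2) :=
  (∑ i : Fin m, C (Q (Pi.single i 1) k) * X i ^ 2) +
  ∑ i : Fin m, ∑ j : Fin m,
    if i < j then C (qpolar Q (Pi.single i 1) (Pi.single j 1) k) * X i * X j else 0

/-- `f₁,…,f_r` is a regular sequence: each `f_k` is a nonzerodivisor in the quotient
ring modulo the ideal generated by its predecessors. -/
def IsRegularSeq {R : Type*} [CommRing R] {r : ℕ} (f : Fin r → R) : Prop :=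
  ∀ k : Fin r, ∀ g : R,
    f k * g ∈ Ideal.span (f '' {j | j < k}) → g ∈ Ideal.span (f '' {j | j < k})

/-!
Applying `β` to `β(q) = Lq` and using `β² = 0` gives the linear relation `(β(L) + L²) q = 0`. Over a
regular sequence the coefficients of such a relation lie in the ideal `(q)`, and since the entries
of `β(L) + L²` and the `q_k` are all quadratic forms, `β(L) + L² = Σ_k c_k q_k` for constant
matrices `c_k`. Evaluating at `w ∈ F₂^m`, where squares of coordinates disappear, turns this into
`ρ(w) + ρ(w)² = Σ_k Q_k(w) c_k`, so `ξ(e_k) = c_k` makes the square commute. If `Q(e_k) = e_k`,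
taking `w = e_k` identifies `c_k` as `L_k + L_k²`.
-/

section RegularSequence

variable {R : Type*} [CommRing R] {r : ℕ}

lemma IsRegularSeq.castSucc {f : Fin (r + 1) → R} (hf : IsRegularSeq f) :
    IsRegularSeq fun i => f (Fin.castSucc i) := by
  intro k g hg
  have himage : (fun i : Fin r => f (Fin.castSucc i)) '' {j | j < k} =
      f '' {j | j < Fin.castSucc k} := by
    ext x
    simp [Fin.exists_fin_succ', (Fin.castSucc_lt_last k).not_gt]
  rw [himage] at hg ⊢
  exact hf _ g hg

lemma IsRegularSeq.mem_span_range_castSucc_of_last_mul_mem {f : Fin (r + 1) → R}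
    (hf : IsRegularSeq f) {g : R}
    (hg : f (Fin.last r) * g ∈ Ideal.span (Set.range fun i : Fin r => f (Fin.castSucc i))) :
    g ∈ Ideal.span (Set.range fun i : Fin r => f (Fin.castSucc i)) := by
  have hrange : (Set.range fun i : Fin r => f (Fin.castSucc i)) =
      f '' {j | j < Fin.last r} := by
    ext x
    simp [Fin.exists_fin_succ', Fin.castSucc_lt_last]
  rw [hrange] at hg ⊢
  exact hf _ g hg

theorem IsRegularSeq.mem_span_range_of_sum_mul_eq_zero {f a : Fin r → R} (hf : IsRegularSeq f)
    (ha : ∑ i, a i * f i = 0) (i : Fin r) : a i ∈ Ideal.span (Set.range f) := by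
  induction r with
  | zero => exact i.elim0
  | succ r ih =>
    have hle : Ideal.span (Set.range fun i : Fin r => f (Fin.castSucc i)) ≤
        Ideal.span (Set.range f) :=
      Ideal.span_mono (Set.range_comp_subset_range _ f)
    rw [Fin.sum_univ_castSucc] at ha
    have hlast : a (Fin.last r) ∈
        Ideal.span (Set.range fun i : Fin r => f (Fin.castSucc i)) := by
      refine hf.mem_span_range_castSucc_of_last_mul_mem
        (Ideal.mem_span_range_iff_exists_fun.2 ⟨fun i => -a (Fin.castSucc i), ?_⟩)
      simp only [neg_mul, Finset.sum_neg_distrib]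
      linear_combination -ha
    obtain ⟨b, hb⟩ := Ideal.mem_span_range_iff_exists_fun.1 hlast
    have hreduced :
        ∑ i : Fin r, (a (Fin.castSucc i) + b i * f (Fin.last r)) * f (Fin.castSucc i) = 0 := by
      rw [← ha, ← hb, Finset.sum_mul, ← Finset.sum_add_distrib]
      exact Finset.sum_congr rfl fun i _ => by ring
    cases i using Fin.lastCases with
    | last => exact hle hlast
    | cast i =>
      have hmul : b i * f (Fin.last r) ∈ Ideal.span (Set.range f) :=
        Ideal.mul_mem_left _ _ (Ideal.subset_span (Set.mem_range_self _))
      exact (Ideal.add_mem_iff_left _ hmul).1 (hle (ih hf.castSucc hreduced i))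

end RegularSequence

section Homogeneous

variable {σ R : Type*} [CommSemiring R]

attribute [local instance] MvPolynomial.gradedAlgebra in
lemma homogeneousComponent_add_mul_of_isHomogeneous {q : MvPolynomial σ R} {d : ℕ}
    (hq : q.IsHomogeneous d) (e : ℕ) (p : MvPolynomial σ R) :
    homogeneousComponent (e + d) (p * q) = homogeneousComponent e p * q := by
  rw [← decomposition.decompose'_apply, ← decomposition.decompose'_apply]
  exact DirectSum.coe_decompose_mul_add_of_right_mem (homogeneousSubmodule σ R) hq

lemma exists_eq_sum_smul_of_isHomogeneous_of_mem_span_range {ι : Type*} [Fintype ι]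
    {q : ι → MvPolynomial σ R} {d : ℕ} (hq : ∀ k, (q k).IsHomogeneous d)
    {p : MvPolynomial σ R} (hp : p.IsHomogeneous d) (hmem : p ∈ Ideal.span (Set.range q)) :
    ∃ c : ι → R, p = ∑ k, c k • q k := by
  obtain ⟨g, rfl⟩ := Ideal.mem_span_range_iff_exists_fun.1 hmem
  refine ⟨fun k => coeff 0 (g k), ?_⟩
  have hcomp (k : ι) : homogeneousComponent d (g k * q k) = coeff 0 (g k) • q k := by
    simpa [smul_eq_C_mul] using homogeneousComponent_add_mul_of_isHomogeneous (hq k) 0 (g k)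
  rw [← homogeneousComponent_eq_self hp, map_sum, Finset.sum_congr rfl fun k _ => hcomp k]

end Homogeneous

section SquareZeroDerivation

variable {R A ι κ : Type*} [CommSemiring R] [CommSemiring A] [Algebra R A] [Fintype ι]

lemma map_derivation_mulVec (D : Derivation R A A) (L : Matrix κ ι A) (v : ι → A) (i : κ) :
    D (L.mulVec v i) = (L.map D).mulVec v i + L.mulVec (fun j => D (v j)) i := by
  simp only [Matrix.mulVec, dotProduct, map_sum, Derivation.leibniz, smul_eq_mul,
    Matrix.map_apply, ← Finset.sum_add_distrib]
  exact Finset.sum_congr rfl fun j _ => by ring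

lemma map_derivation_add_mul_self_mulVec_eq_zero {D : Derivation R A A} (hD : ∀ a, D (D a) = 0)
    {L : Matrix ι ι A} {v : ι → A} (hL : L.mulVec v = fun i => D (v i)) :
    (L.map D + L * L).mulVec v = 0 := by
  ext i
  calc (L.map D + L * L).mulVec v i
      = (L.map D).mulVec v i + L.mulVec (L.mulVec v) i := by
        rw [Matrix.add_mulVec, Matrix.mulVec_mulVec, Pi.add_apply]
    _ = (L.map D).mulVec v i + L.mulVec (fun j => D (v j)) i := by rw [hL]
    _ = D (L.mulVec v i) := (map_derivation_mulVec D L v i).symm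
    _ = 0 := by rw [hL, hD]

end SquareZeroDerivation

section Bockstein

/-- The Bockstein operator `bockstein`, bundled as a derivation. -/
noncomputable def bocksteinDerivation (m : ℕ) :
    Derivation (ZMod 2) (MvPolynomial (Fin m) (ZMod 2)) (MvPolynomial (Fin m) (ZMod 2)) :=
  .mk'
    { toFun := bockstein
      map_add' := fun f g => by simp only [bockstein, map_add, mul_add, Finset.sum_add_distrib]
      map_smul' := fun a f => by
        simp only [bockstein, Derivation.map_smul, mul_smul_comm, ← Finset.smul_sum,
          RingHom.id_apply] }
    fun f g => by
      change bockstein (f * g) = f * bockstein g + g * bockstein f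
      simp only [bockstein, Derivation.leibniz, smul_eq_mul, Finset.mul_sum,
        ← Finset.sum_add_distrib]
      exact Finset.sum_congr rfl fun i _ => by ring

variable {m : ℕ}

lemma coe_bocksteinDerivation : ⇑(bocksteinDerivation m) = bockstein :=
  rfl

lemma bockstein_X (i : Fin m) : bockstein (X i) = X i ^ 2 := by
  simp [bockstein, pderiv_X, Pi.single_apply]

lemma bockstein_bockstein (f : MvPolynomial (Fin m) (ZMod 2)) : bockstein (bockstein f) = 0 := by
  rw [← coe_bocksteinDerivation]
  induction f using MvPolynomial.induction_on with
  | C a => simp [← algebraMap_eq]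
  | add p q hp hq => rw [map_add, map_add, hp, hq, add_zero]
  | mul_X p i hp =>
    have htwo : (2 : MvPolynomial (Fin m) (ZMod 2)) = 0 := CharTwo.two_eq_zero
    have hX : bocksteinDerivation m (X i) = X i ^ 2 := bockstein_X i
    simp only [Derivation.leibniz, Derivation.leibniz_pow, hX, map_add, hp, smul_eq_mul]
    rw [nsmul_eq_mul, Nat.cast_ofNat]
    linear_combination (p * X i ^ 3 + X i ^ 2 * bocksteinDerivation m p) * htwo

end Bockstein

section LinearFormMatrix

variable {σ κ ι R : Type*} [Fintype σ] [CommSemiring R]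

/-- The matrix of linear forms `Σ_i A_i x_i` with coefficient matrices `A_i`. -/
noncomputable def linearFormMatrix (A : σ → Matrix κ ι R) :
    Matrix κ ι (MvPolynomial σ R) :=
  ∑ i, (X i : MvPolynomial σ R) • (A i).map C

lemma linearFormMatrix_apply (A : σ → Matrix κ ι R) (r : κ) (s : ι) :
    linearFormMatrix A r s = ∑ i, A i r s • X i := by
  simp [linearFormMatrix, Matrix.sum_apply, smul_eq_C_mul, mul_comm]

lemma isHomogeneous_linearFormMatrix_apply (A : σ → Matrix κ ι R) (r : κ) (s : ι) :
    (linearFormMatrix A r s).IsHomogeneous 1 := by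
  rw [linearFormMatrix_apply]
  exact Submodule.sum_mem _ fun i _ =>
    Submodule.smul_mem (homogeneousSubmodule σ R 1) _ (isHomogeneous_X R i)

lemma linearFormMatrix_map_eval (A : σ → Matrix κ ι R) (w : σ → R) :
    (linearFormMatrix A).map (eval w) = ∑ i, w i • A i := by
  ext r s
  simp [linearFormMatrix_apply, Matrix.sum_apply, smul_eval, mul_comm]

lemma bockstein_linearFormMatrix_apply {m : ℕ} (A : Fin m → Matrix κ ι (ZMod 2)) (r : κ) (s : ι) :
    bockstein (linearFormMatrix A r s) = ∑ i, A i r s • X i ^ 2 := by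
  rw [linearFormMatrix_apply, ← coe_bocksteinDerivation, map_sum]
  simp only [Derivation.map_smul, coe_bocksteinDerivation, bockstein_X]

end LinearFormMatrix

section AssocPoly

lemma qpolar_eq_polar {W V : Type*} [AddCommGroup W] [AddCommGroup V] [Module (ZMod 2) V]
    (Q : W → V) : qpolar Q = QuadraticMap.polar Q := by
  ext x y
  simp only [qpolar, QuadraticMap.polar, ZModModule.sub_eq_add]

/-- A quadratic map between `F₂`-vector spaces as a bundled `QuadraticMap`. -/
def IsQuadraticMap.toQuadraticMap {W V : Type*} [AddCommGroup W] [Module (ZMod 2) W]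
    [AddCommGroup V] [Module (ZMod 2) V] {Q : W → V} (hQ : IsQuadraticMap Q) :
    QuadraticMap (ZMod 2) W V :=
  have polar_add_left (x x' y : W) : QuadraticMap.polar Q (x + x') y =
      QuadraticMap.polar Q x y + QuadraticMap.polar Q x' y := by
    rw [← qpolar_eq_polar, hQ.1]
  .ofPolar Q
    (fun a x => by
      have hzero : Q 0 = 0 := by simpa [qpolar, ZModModule.add_self] using hQ.1 0 0 0
      obtain rfl | rfl : a = 0 ∨ a = 1 := by revert a; decide
      · simp [hzero]
      · simp)
    polar_add_left
    (fun a x y =>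
      ZMod.map_smul (AddMonoidHom.mk' (QuadraticMap.polar Q · y) (polar_add_left · · y)) a x)

lemma IsQuadraticMap.coe_toQuadraticMap {W V : Type*} [AddCommGroup W] [Module (ZMod 2) W]
    [AddCommGroup V] [Module (ZMod 2) V] {Q : W → V} (hQ : IsQuadraticMap Q) :
    ⇑hQ.toQuadraticMap = Q :=
  rfl

lemma quadraticMap_apply_eq_sum {R ι N : Type*} [CommRing R] [Fintype ι] [LinearOrder ι]
    [AddCommGroup N] [Module R N] (Q : QuadraticMap R (ι → R) N) (w : ι → R) :
    Q w = (∑ i, (w i * w i) • Q (Pi.single i 1)) + ∑ i, ∑ j, if i < j then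
      (w i * w j) • QuadraticMap.polar Q (Pi.single i 1) (Pi.single j 1) else 0 := by
  let B := Q.toBilin (Pi.basisFun R ι)
  have hB (i j : ι) : B (Pi.single i 1) (Pi.single j 1) =
      (if i = j then Q (Pi.single i 1) else 0) +
        if i < j then QuadraticMap.polar Q (Pi.single i 1) (Pi.single j 1) else 0 := by
    have hbasis := Q.toBilin_apply (Pi.basisFun R ι) i j
    simp only [Pi.basisFun_apply] at hbasis
    rw [hbasis]
    rcases eq_or_ne i j with rfl | hij
    · simp
    · simp [hij]
  calc Q w = B w w := by
        rw [← LinearMap.BilinMap.toQuadraticMap_apply, Q.toQuadraticMap_toBilin]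
    _ = ∑ i, ∑ j, (w i * w j) • B (Pi.single i 1) (Pi.single j 1) := by
        rw [← LinearMap.sum_repr_mul_repr_mul (Pi.basisFun R ι) (Pi.basisFun R ι) w w]
        simp [Finsupp.sum_fintype, mul_smul]
    _ = _ := by
        simp [hB, smul_add, Finset.sum_add_distrib]

variable {m n : ℕ} {Q : (Fin m → ZMod 2) → Fin n → ZMod 2}

lemma eval_assocPoly (hQ : IsQuadraticMap Q) (w : Fin m → ZMod 2) (k : Fin n) :
    eval w (assocPoly Q k) = Q w k := by
  have hsum := congrFun (quadraticMap_apply_eq_sum hQ.toQuadraticMap w) k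
  rw [hQ.coe_toQuadraticMap, ← qpolar_eq_polar] at hsum
  rw [hsum]
  simp [assocPoly, apply_ite, ite_apply, sq, mul_comm, mul_left_comm, mul_assoc]

lemma isHomogeneous_assocPoly (Q : (Fin m → ZMod 2) → Fin n → ZMod 2) (k : Fin n) :
    (assocPoly Q k).IsHomogeneous 2 := by
  have hmonomial (a : ZMod 2) (i j : Fin m) : (C a * X i * X j).IsHomogeneous 2 :=
    (isHomogeneous_C_mul_X a i).mul (isHomogeneous_X _ j)
  refine .add (.sum _ _ _ fun i _ => ?_) (.sum _ _ _ fun i _ => .sum _ _ _ fun j _ => ?_)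
  · simpa [sq, mul_assoc] using hmonomial _ i i
  · split_ifs
    · exact hmonomial _ i j
    · exact isHomogeneous_zero _ _ _

end AssocPoly

section RepresentationSquare

variable {m n : ℕ}

lemma map_eval_map_bockstein_add_mul_self {ι : Type*} [Fintype ι]
    (A : Fin m → Matrix ι ι (ZMod 2)) (w : Fin m → ZMod 2) :
    ((linearFormMatrix A).map bockstein + linearFormMatrix A * linearFormMatrix A).map (eval w) =
      (∑ i, w i • A i) + (∑ i, w i • A i) * ∑ i, w i • A i := by
  rw [Matrix.map_add _ (map_add _), Matrix.map_mul, linearFormMatrix_map_eval]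
  congr 1
  ext r s
  -- On `F₂`-points `x_i²` and `x_i` agree, so `β(L)` evaluates like `L` itself.
  simp [bockstein_linearFormMatrix_apply, Matrix.sum_apply, smul_eval, mul_comm, ZMod.pow_card]

lemma isHomogeneous_map_bockstein_add_mul_self_apply {ι : Type*} [Fintype ι]
    (A : Fin m → Matrix ι ι (ZMod 2)) (r s : ι) :
    (((linearFormMatrix A).map bockstein + linearFormMatrix A * linearFormMatrix A)
      r s).IsHomogeneous 2 := by
  rw [Matrix.add_apply, Matrix.map_apply, bockstein_linearFormMatrix_apply, Matrix.mul_apply]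
  refine .add (.sum _ _ _ fun i _ => ?_) (.sum _ _ _ fun t _ => ?_)
  · exact Submodule.smul_mem (homogeneousSubmodule _ _ 2) _ (isHomogeneous_X_pow i 2)
  · exact (isHomogeneous_linearFormMatrix_apply A r t).mul
      (isHomogeneous_linearFormMatrix_apply A t s)

theorem exists_linearMap_apply_eval_eq_add_mul_self {q : Fin n → MvPolynomial (Fin m) (ZMod 2)}
    (hq : ∀ k, (q k).IsHomogeneous 2) (hreg : IsRegularSeq q)
    {A : Fin m → Matrix (Fin n) (Fin n) (ZMod 2)}
    (hA : (linearFormMatrix A).mulVec q = fun k => bockstein (q k)) :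
    ∃ ξ : (Fin n → ZMod 2) →ₗ[ZMod 2] Matrix (Fin n) (Fin n) (ZMod 2),
      ∀ w : Fin m → ZMod 2, ξ (fun k => eval w (q k)) =
        (∑ i, w i • A i) + (∑ i, w i • A i) * ∑ i, w i • A i := by
  let M := (linearFormMatrix A).map bockstein + linearFormMatrix A * linearFormMatrix A
  have hsyzygy : M.mulVec q = 0 :=
    map_derivation_add_mul_self_mulVec_eq_zero (D := bocksteinDerivation m) bockstein_bockstein hA
  have hmem (r s : Fin n) : M r s ∈ Ideal.span (Set.range q) :=
    hreg.mem_span_range_of_sum_mul_eq_zero (congrFun hsyzygy r) s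
  choose c hc using fun r s => exists_eq_sum_smul_of_isHomogeneous_of_mem_span_range hq
    (isHomogeneous_map_bockstein_add_mul_self_apply A r s) (hmem r s)
  refine ⟨Fintype.linearCombination (ZMod 2) fun k => Matrix.of fun r s => c r s k, fun w => ?_⟩
  rw [← map_eval_map_bockstein_add_mul_self]
  ext r s
  rw [Matrix.map_apply, hc]
  simp [Fintype.linearCombination_apply, Matrix.sum_apply, smul_eval, mul_comm]

lemma sum_smul_apply_single_eq {R ι N : Type*} [CommSemiring R] [Fintype ι] [DecidableEq ι]
    [AddCommMonoid N] [Module R N] {Q : (ι → R) → ι → R} {F : (ι → R) → N}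
    (hQ : ∀ i, Q (Pi.single i 1) = Pi.single i 1) (ξ : (ι → R) →ₗ[R] N)
    (hξ : ∀ w, ξ (Q w) = F w) (w : ι → R) : ∑ i, Q w i • F (Pi.single i 1) = F w := by
  calc ∑ i, Q w i • F (Pi.single i 1) = ∑ i, Q w i • ξ (Pi.single i 1) := by
        simp only [← hξ, hQ]
    _ = ξ (Q w) := by
        conv_rhs => rw [pi_eq_sum_univ' (Q w), map_sum]
        simp only [map_smul]
    _ = F w := hξ w

theorem gl_representation_square_general
    (Q : (Fin m → ZMod 2) → (Fin n → ZMod 2)) (hQ : IsQuadraticMap Q)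
    (hreg : IsRegularSeq (assocPoly Q)) (Ls : Fin m → Matrix (Fin n) (Fin n) (ZMod 2))
    (L : Matrix (Fin n) (Fin n) (MvPolynomial (Fin m) (ZMod 2)))
    (hL : L = ∑ i : Fin m, (X i : MvPolynomial (Fin m) (ZMod 2)) • (Ls i).map C)
    (hLq : L.mulVec (assocPoly Q) = fun k => bockstein (assocPoly Q k)) :
    ∃ ξ : (Fin n → ZMod 2) →ₗ[ZMod 2] Matrix (Fin n) (Fin n) (ZMod 2),
      ∀ w : Fin m → ZMod 2, ξ (Q w) =
        (∑ i, w i • Ls i) + (∑ i, w i • Ls i) * ∑ i, w i • Ls i := by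
  subst hL
  obtain ⟨ξ, hξ⟩ :=
    exists_linearMap_apply_eval_eq_add_mul_self (isHomogeneous_assocPoly Q) hreg hLq
  exact ⟨ξ, fun w => by simpa only [eval_assocPoly hQ] using hξ w⟩

end RepresentationSquare

/-- Let `Q : F₂^n → F₂^n` be a quadratic map whose associated polynomials
are in bijective form (`Q(e_i) = e_i`) and form a regular sequence in every order, and let
`L = Σ_i L_i x_i` satisfy `β(q) = Lq`. With `ρ(e_i) = L_i` and `ξ(e_i) = L_i² + L_i`
(extended linearly), the square commutes: `ξ(Q(w)) = Q_gl(ρ(w)) = ρ(w) + ρ(w)²`. -/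
theorem gl_representation_square {n : ℕ}
    (Q : (Fin n → ZMod 2) → (Fin n → ZMod 2)) (hQ : IsQuadraticMap Q)
    (hbij : ∀ i : Fin n, Q (Pi.single i 1) = Pi.single i 1)
    (hreg : ∀ σ : Equiv.Perm (Fin n), IsRegularSeq (fun k => assocPoly Q (σ k)))
    (Ls : Fin n → Matrix (Fin n) (Fin n) (ZMod 2))
    (L : Matrix (Fin n) (Fin n) (MvPolynomial (Fin n) (ZMod 2)))
    (hL : L = ∑ i : Fin n, (X i : MvPolynomial (Fin n) (ZMod 2)) • (Ls i).map C)
    (hLq : L.mulVec (fun k => assocPoly Q k) = fun k => bockstein (assocPoly Q k)) :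
    ∀ w : Fin n → ZMod 2,
      (∑ i : Fin n, Q w i • (Ls i * Ls i + Ls i)) =
        (∑ i : Fin n, w i • Ls i) + (∑ i : Fin n, w i • Ls i) * (∑ i : Fin n, w i • Ls i) := by
  obtain ⟨ξ, hξ⟩ := gl_representation_square_general Q hQ (hreg 1) Ls L hL hLq
  exact fun w => by simpa [Pi.single_apply, add_comm] using sum_smul_apply_single_eq hbij ξ hξ w
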